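/- arXiv:2209.14939 — 2 statements merged into one kernel-verified Lean document; each statement's English description precedes it below -/
import Mathlib

section
/- For every δ ∈ (0,1/2) and ξ > 1, one has lim_{x→∞} ∑_{H ∈ 𝔥₁} 1/ln H = ln(1/(2δ)) / (2 ln ξ). (For all sufficiently large x, every H ∈ 𝔥₁ satisfies H ≥ 2(ln x)^δ > 1, so the summands are well defined.) -/
open scoped Classical

noncomputable def yy (δ x : ℝ) : ℕ := ⌈x * Real.log x ^ δ⌉₊

noncomputable def zz (δ x : ℝ) : ℝ :=
  (yy δ x : ℝ) * Real.log (Real.log x) ^ 2 / Real.log x ^ (1/2 : ℝ)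

noncomputable def primesUpTo (t : ℝ) : Finset ℕ :=
  (Finset.range (⌊t⌋₊ + 1)).filter fun p => p.Prime ∧ (p : ℝ) ≤ t

noncomputable def PP (t : ℝ) : ℕ := ∏ p ∈ primesUpTo t, p

noncomputable def sigUpTo (t : ℝ) : ℝ := ∏ p ∈ primesUpTo t, (1 - 1 / (p : ℝ))

noncomputable def primesBetween (w t : ℝ) : Finset ℕ :=
  (Finset.range (⌊t⌋₊ + 1)).filter fun p => p.Prime ∧ w < (p : ℝ) ∧ (p : ℝ) ≤ t

noncomputable def sigBetween (w t : ℝ) : ℝ := ∏ p ∈ primesBetween w t, (1 - 1 / (p : ℝ))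

def inS (t : ℝ) (b n : ℤ) : Prop :=
  ∀ p : ℕ, p.Prime → (p : ℝ) ≤ t → ¬ ((p : ℤ) ∣ (n - b))

def inSBetween (w t : ℝ) (b n : ℤ) : Prop :=
  ∀ p : ℕ, p.Prime → w < (p : ℝ) → (p : ℝ) ≤ t → ¬ ((p : ℤ) ∣ (n - b))

noncomputable def countS (t : ℝ) (b lo hi : ℤ) : ℕ :=
  ((Finset.Icc lo hi).filter (inS t b)).card

noncomputable def EE (δ x : ℝ) (g : ℤ → ℝ) : ℝ :=
  (1 / (PP (zz δ x) : ℝ)) * ∑ b ∈ Finset.range (PP (zz δ x)), g (b : ℤ)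

def frakH (δ ξ x : ℝ) : Set ℝ :=
  {H | ∃ j : ℕ, H = ξ ^ j ∧ 2 * (yy δ x : ℝ) / x ≤ H ∧ H ≤ (yy δ x : ℝ) / (ξ * zz δ x)}

def frakH1 (δ ξ x : ℝ) : Set ℝ :=
  {H | ∃ j : ℕ, Even j ∧ H = ξ ^ j ∧ 2 * (yy δ x : ℝ) / x ≤ H ∧ H ≤ (yy δ x : ℝ) / (ξ * zz δ x)}

def frakH2 (δ ξ x : ℝ) : Set ℝ :=
  {H | ∃ j : ℕ, Odd j ∧ H = ξ ^ j ∧ 2 * (yy δ x : ℝ) / x ≤ H ∧ H ≤ (yy δ x : ℝ) / (ξ * zz δ x)}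

noncomputable def QH (δ ξ x H : ℝ) : Finset ℕ :=
  (Finset.range (⌊(yy δ x : ℝ) / H⌋₊ + 1)).filter fun q =>
    q.Prime ∧ (yy δ x : ℝ) / (ξ * H) < (q : ℝ) ∧ (q : ℝ) ≤ (yy δ x : ℝ) / H

noncomputable def Hq (δ ξ x : ℝ) (q : ℕ) : ℝ :=
  if h : ∃ H ∈ frakH δ ξ x, (yy δ x : ℝ) / (ξ * H) < (q : ℝ) ∧ (q : ℝ) ≤ (yy δ x : ℝ) / H
  then h.choose else 1

noncomputable def APset (M : ℝ) (K : ℕ) (b : ℤ) (H : ℝ) (q : ℕ) (n : ℤ) : Finset ℤ :=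
  ((Finset.Icc 1 ⌊(K : ℝ) * H⌋₊).image fun h : ℕ => n + (q : ℤ) * (h : ℤ)).filter (inS (H ^ M) b)

noncomputable def lam (M zv : ℝ) (K : ℕ) (b : ℤ) (H : ℝ) (q : ℕ) (n : ℤ) : ℝ :=
  if ∀ m ∈ APset M K b H q n, inSBetween (H ^ M) zv b m
  then sigBetween (H ^ M) zv ^ (-((APset M K b H q n).card : ℤ))
  else 0

noncomputable def APsetStar (M : ℝ) (K : ℕ) (N b : ℤ) (H : ℝ) (q : ℕ) (n : ℤ) : Finset ℤ :=
  ((Finset.Icc 1 ⌊(K : ℝ) * H⌋₊).image fun h : ℕ => n - (q : ℤ) * (h : ℤ)).filter (inS (H ^ M) (-N - b))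

noncomputable def lamStar (M zv : ℝ) (K : ℕ) (N b : ℤ) (H : ℝ) (q : ℕ) (n : ℤ) : ℝ :=
  if ∀ m ∈ APsetStar M K N b H q n, inSBetween (H ^ M) zv (-N - b) m
  then sigBetween (H ^ M) zv ^ (-((APsetStar M K N b H q n).card : ℤ))
  else 0

open Filter Topology in
theorem tendsto_sum_range_inv_sub_log :
    Tendsto (fun n : ℕ => ∑ i ∈ Finset.range n, ((i : ℝ))⁻¹ - Real.log n) atTop
      (𝓝 Real.eulerMascheroniConstant) := by
  have h := Real.tendsto_harmonic_sub_log.sub (tendsto_inv_atTop_nhds_zero_nat (𝕜 := ℝ))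
  rw [sub_zero] at h
  refine h.congr fun n => ?_
  have hn : (harmonic n : ℝ) = ∑ i ∈ Finset.range (n + 1), ((i : ℝ))⁻¹ := by
    rw [Finset.sum_range_succ', harmonic]
    push_cast
    simp
  rw [hn, Finset.sum_range_succ]
  ring

open Filter Topology in
/-- If `a ~ α t` and `b ~ β t` with `0 < α < β` and `t → ∞`, then the sum of `1 / i` over the
natural numbers in `[a, b]` tends to `log (β / α)`. -/
theorem tendsto_tsum_inv_between {ι : Type*} {l : Filter ι} {a b t : ι → ℝ} {α β : ℝ}
    (hα : 0 < α) (hαβ : α < β) (ht : Tendsto t l atTop)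
    (ha : Tendsto (fun x => a x / t x) l (𝓝 α)) (hb : Tendsto (fun x => b x / t x) l (𝓝 β)) :
    Tendsto (fun x => ∑' i : ℕ, if a x ≤ i ∧ (i : ℝ) ≤ b x then ((i : ℝ))⁻¹ else 0) l
      (𝓝 (Real.log (β / α))) := by
  have hβ : 0 < β := hα.trans hαβ
  have htpos : ∀ᶠ x in l, 0 < t x := ht.eventually_gt_atTop 0
  have atTop_of_ratio : ∀ {u : ι → ℝ} {c : ℝ}, 0 < c →
      Tendsto (fun x => u x / t x) l (𝓝 c) → Tendsto u l atTop := fun hc hu =>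
    (hu.pos_mul_atTop hc ht).congr' (htpos.mono fun x hx => div_mul_cancel₀ _ hx.ne')
  have haT : Tendsto a l atTop := atTop_of_ratio hα ha
  have hbT : Tendsto b l atTop := atTop_of_ratio hβ hb
  set m : ι → ℕ := fun x => ⌈a x⌉₊
  set n : ι → ℕ := fun x => ⌊b x⌋₊ + 1
  have hmT : Tendsto m l atTop := tendsto_nat_ceil_atTop.comp haT
  have hnT : Tendsto n l atTop :=
    (tendsto_add_atTop_nat 1).comp (tendsto_nat_floor_atTop.comp hbT)
  have hm : Tendsto (fun x => (m x : ℝ) / a x) l (𝓝 1) :=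
    (tendsto_nat_ceil_div_atTop (R := ℝ)).comp haT
  have hn : Tendsto (fun x => (n x : ℝ) / b x) l (𝓝 1) := by
    have := ((tendsto_nat_floor_div_atTop (R := ℝ)).comp hbT).add
      (tendsto_inv_atTop_zero.comp hbT)
    rw [add_zero] at this
    refine this.congr fun x => ?_
    simp only [Function.comp, n]
    push_cast
    ring
  have hratio : Tendsto (fun x => (n x : ℝ) / m x) l (𝓝 (β / α)) := by
    have := (hn.mul hb).div (hm.mul ha) (by simpa using hα.ne')
    rw [one_mul, one_mul] at this
    refine this.congr' ?_
    filter_upwards [htpos, haT.eventually_gt_atTop 0, hbT.eventually_gt_atTop 0,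
      hmT.eventually_gt_atTop 0] with x h1 h2 h3 h4
    have h4' : (m x : ℝ) ≠ 0 := by exact_mod_cast h4.ne'
    simp only [Pi.div_apply]
    field_simp
  have hlog := hratio.log (div_pos hβ hα).ne'
  have hS := ((tendsto_sum_range_inv_sub_log.comp hnT).sub
    (tendsto_sum_range_inv_sub_log.comp hmT)).add hlog
  rw [sub_self, zero_add] at hS
  refine hS.congr' ?_
  filter_upwards [haT.eventually_gt_atTop 0, hbT.eventually_gt_atTop 0,
    hmT.eventually_gt_atTop 0, hnT.eventually_gt_atTop 0,
    hratio.eventually (lt_mem_nhds ((one_lt_div hα).2 hαβ))] with x h1 h2 h3 h4 h5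
  have h3' : (0 : ℝ) < m x := by exact_mod_cast h3
  have h4' : (0 : ℝ) < n x := by exact_mod_cast h4
  have hmn : m x ≤ n x := by
    rw [one_lt_div h3'] at h5
    exact_mod_cast h5.le
  have hsum : (∑' i : ℕ, if a x ≤ i ∧ (i : ℝ) ≤ b x then ((i : ℝ))⁻¹ else 0) =
      ∑ i ∈ Finset.Ico (m x) (n x), ((i : ℝ))⁻¹ := by
    have hiff : ∀ i : ℕ, (a x ≤ i ∧ (i : ℝ) ≤ b x) ↔ i ∈ Finset.Ico (m x) (n x) := fun i => by
      rw [Finset.mem_Ico, Nat.ceil_le, Nat.lt_add_one_iff, Nat.le_floor_iff h2.le]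
    rw [tsum_eq_sum (s := Finset.Ico (m x) (n x)) fun i hi => if_neg (mt (hiff i).1 hi)]
    exact Finset.sum_congr rfl fun i hi => if_pos ((hiff i).2 hi)
  rw [hsum, Finset.sum_Ico_eq_sub _ hmn, Real.log_div h4'.ne' h3'.ne']
  simp only [Function.comp]
  ring

open Filter Topology in
/-- If `log A ~ α t` and `log B ~ β t` with `0 < α < β` and `t → ∞`, then the sum of `1 / log H`
over the even powers `H` of `ξ` in `[A, B]` tends to `log (β / α) / (2 log ξ)`. -/
theorem tendsto_tsum_inv_log_even_pow {ι : Type*} {l : Filter ι} {A B t : ι → ℝ} {α β ξ : ℝ}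
    (hξ : 1 < ξ) (hα : 0 < α) (hαβ : α < β) (ht : Tendsto t l atTop)
    (hApos : ∀ᶠ x in l, 0 < A x) (hBpos : ∀ᶠ x in l, 0 < B x)
    (hA : Tendsto (fun x => Real.log (A x) / t x) l (𝓝 α))
    (hB : Tendsto (fun x => Real.log (B x) / t x) l (𝓝 β)) :
    Tendsto (fun x => ∑' j : ℕ, if Even j ∧ A x ≤ ξ ^ j ∧ ξ ^ j ≤ B x
        then 1 / Real.log (ξ ^ j) else 0) l (𝓝 (Real.log (β / α) / (2 * Real.log ξ))) := by
  have hc : 0 < 2 * Real.log ξ := mul_pos two_pos (Real.log_pos hξ)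
  set c := 2 * Real.log ξ with hc_def
  have ha : Tendsto (fun x => Real.log (A x) / c / t x) l (𝓝 (α / c)) :=
    (hA.div_const c).congr fun x => div_right_comm _ _ _
  have hb : Tendsto (fun x => Real.log (B x) / c / t x) l (𝓝 (β / c)) :=
    (hB.div_const c).congr fun x => div_right_comm _ _ _
  have key := (tendsto_tsum_inv_between (div_pos hα hc)
    ((div_lt_div_iff_of_pos_right hc).2 hαβ) ht ha hb).div_const c
  rw [div_div_div_cancel_right₀ hc.ne'] at key
  refine key.congr' ?_
  filter_upwards [hApos, hBpos] with x hAx hBx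
  have hinj : Function.Injective fun i : ℕ => 2 * i := fun i j h => by simpa using h
  rw [← tsum_div_const, eq_comm, ← hinj.tsum_eq]
  · refine tsum_congr fun i => ?_
    have hlog : Real.log (ξ ^ (2 * i)) = i * c := by
      rw [Real.log_pow, hc_def]
      push_cast
      ring
    have hpow : 0 < ξ ^ (2 * i) := pow_pos (one_pos.trans hξ) _
    have h1 : A x ≤ ξ ^ (2 * i) ↔ Real.log (A x) / c ≤ i := by
      rw [← Real.log_le_log_iff hAx hpow, hlog, div_le_iff₀ hc]
    have h2 : ξ ^ (2 * i) ≤ B x ↔ (i : ℝ) ≤ Real.log (B x) / c := by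
      rw [← Real.log_le_log_iff hpow hBx, hlog, le_div_iff₀ hc]
    simp only [h1, h2, hlog, even_two_mul, true_and, ite_div, zero_div, one_div, mul_inv]
    simp only [div_eq_mul_inv]
  · intro j hj
    by_contra hodd
    refine hj (if_neg fun h => hodd ?_)
    obtain ⟨k, hk⟩ := h.1
    exact ⟨k, show 2 * k = j by omega⟩

open Filter Topology in
theorem tendsto_mul_log_rpow_atTop {δ : ℝ} (hδ : 0 < δ) :
    Tendsto (fun x : ℝ => x * Real.log x ^ δ) atTop atTop :=
  tendsto_id.atTop_mul_atTop₀ ((tendsto_rpow_atTop hδ).comp Real.tendsto_log_atTop)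

open Filter Topology in
theorem tendsto_log_two_mul_yy_div {δ : ℝ} (hδ : 0 < δ) :
    Tendsto (fun x : ℝ => Real.log (2 * (yy δ x : ℝ) / x) / Real.log (Real.log x)) atTop
      (𝓝 δ) := by
  have hu := tendsto_mul_log_rpow_atTop hδ
  have ht : Tendsto (fun x : ℝ => Real.log (Real.log x)) atTop atTop :=
    Real.tendsto_log_atTop.comp Real.tendsto_log_atTop
  have hy : Tendsto (fun x : ℝ => (yy δ x : ℝ) / (x * Real.log x ^ δ)) atTop (𝓝 1) :=
    (tendsto_nat_ceil_div_atTop (R := ℝ)).comp hu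
  have h := (((hy.log one_ne_zero).const_add (Real.log 2)).div_atTop ht).add_const δ
  rw [zero_add] at h
  refine h.congr' ?_
  filter_upwards [eventually_gt_atTop 0, Real.tendsto_log_atTop.eventually_gt_atTop 0,
    ht.eventually_gt_atTop 0, hu.eventually_gt_atTop 0] with x hx hL htx hux
  have hyx : 0 < (yy δ x : ℝ) := hux.trans_le (Nat.le_ceil _)
  have hLδ : 0 < Real.log x ^ δ := Real.rpow_pos_of_pos hL δ
  rw [Real.log_div hyx.ne' hux.ne', Real.log_mul hx.ne' hLδ.ne', Real.log_rpow hL,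
    Real.log_div (by positivity) hx.ne', Real.log_mul two_ne_zero hyx.ne']
  field_simp
  ring

open Filter Topology in
theorem tendsto_log_yy_div_mul_zz {δ ξ : ℝ} (hδ : 0 < δ) (hξ : 1 < ξ) :
    Tendsto (fun x : ℝ => Real.log ((yy δ x : ℝ) / (ξ * zz δ x)) / Real.log (Real.log x)) atTop
      (𝓝 (1 / 2)) := by
  have hu := tendsto_mul_log_rpow_atTop hδ
  have ht : Tendsto (fun x : ℝ => Real.log (Real.log x)) atTop atTop :=
    Real.tendsto_log_atTop.comp Real.tendsto_log_atTop
  have hlog : Tendsto (fun x : ℝ => Real.log (Real.log (Real.log x)) / Real.log (Real.log x))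
      atTop (𝓝 0) := (Real.isLittleO_log_id_atTop.tendsto_div_nhds_zero).comp ht
  have h := ((ht.const_div_atTop (Real.log ξ)).add (hlog.const_mul 2)).const_sub (1 / 2)
  rw [mul_zero, add_zero, sub_zero] at h
  refine h.congr' ?_
  filter_upwards [Real.tendsto_log_atTop.eventually_gt_atTop 0,
    ht.eventually_gt_atTop 0, hu.eventually_gt_atTop 0] with x hL htx hux
  have hyx : 0 < (yy δ x : ℝ) := hux.trans_le (Nat.le_ceil _)
  have hLh : 0 < Real.log x ^ (1 / 2 : ℝ) := Real.rpow_pos_of_pos hL _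
  have hξ0 : 0 < ξ := one_pos.trans hξ
  have heq : (yy δ x : ℝ) / (ξ * zz δ x) =
      Real.log x ^ (1 / 2 : ℝ) / (ξ * Real.log (Real.log x) ^ 2) := by
    rw [zz]
    field_simp
  rw [heq, Real.log_div hLh.ne' (by positivity), Real.log_mul hξ0.ne' (by positivity),
    Real.log_rpow hL, Real.log_pow]
  push_cast
  field_simp

theorem stmt10 (δ ξ : ℝ) (hδ0 : 0 < δ) (hδ1 : δ < 1/2) (hξ : 1 < ξ) :
    Filter.Tendsto (fun x : ℝ =>
        ∑' j : ℕ, if Even j ∧ 2 * (yy δ x : ℝ) / x ≤ ξ ^ j ∧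
            ξ ^ j ≤ (yy δ x : ℝ) / (ξ * zz δ x)
          then 1 / Real.log (ξ ^ j) else 0)
      Filter.atTop (nhds (Real.log (1 / (2 * δ)) / (2 * Real.log ξ))) := by
  have ht : Filter.Tendsto (fun x : ℝ => Real.log (Real.log x)) Filter.atTop Filter.atTop :=
    Real.tendsto_log_atTop.comp Real.tendsto_log_atTop
  have hy : ∀ᶠ x in Filter.atTop, 0 < (yy δ x : ℝ) :=
    ((tendsto_mul_log_rpow_atTop hδ0).eventually_gt_atTop 0).mono fun x hx =>
      hx.trans_le (Nat.le_ceil _)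
  have hApos : ∀ᶠ x in Filter.atTop, 0 < 2 * (yy δ x : ℝ) / x := by
    filter_upwards [hy, Filter.eventually_gt_atTop 0] with x hyx hx
    positivity
  have hBpos : ∀ᶠ x in Filter.atTop, 0 < (yy δ x : ℝ) / (ξ * zz δ x) := by
    filter_upwards [hy, Real.tendsto_log_atTop.eventually_gt_atTop 0,
      ht.eventually_gt_atTop 0] with x hyx hL htx
    have hξ0 : 0 < ξ := one_pos.trans hξ
    have hLh : 0 < Real.log x ^ (1 / 2 : ℝ) := Real.rpow_pos_of_pos hL _
    rw [zz]
    positivity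
  have h := tendsto_tsum_inv_log_even_pow hξ hδ0 hδ1 ht hApos hBpos
    (tendsto_log_two_mul_yy_div hδ0) (tendsto_log_yy_div_mul_zz hδ0 hξ)
  rw [div_div] at h
  convert h
end

section
/- Fix δ ∈ (0,1/2). There exist C > 0 and x₀ such that for all x ≥ x₀ and every integer N: #{b ∈ {0,…,P_z − 1} : #(S_z(b) ∩ [1,y]) > 2σ_z y} ≤ C·P_z/ln x, and #{b ∈ {0,…,P_z − 1} : #(S_z(−N−b) ∩ [−y,−1]) > 2σ_z y} ≤ C·P_z/ln x. -/
open scoped Classical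

theorem card_filter_range_mul {m n : ℕ} (hmn : m.Coprime n) (hm : 0 < m) (hn : 0 < n)
    (R Q : ℕ → Prop) [DecidablePred R] [DecidablePred Q]
    (hR : ∀ b, R (b % m) ↔ R b) (hQ : ∀ b, Q (b % n) ↔ Q b) :
    ((Finset.range (m * n)).filter fun b : ℕ => R b ∧ Q b).card =
      ((Finset.range m).filter R).card * ((Finset.range n).filter Q).card := by
  rw [← Finset.card_product]
  refine Finset.card_bij' (fun b _ => (b % m, b % n))
    (fun c _ => (Nat.chineseRemainder hmn c.1 c.2 : ℕ)) ?_ ?_ ?_ ?_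
  · intro b hb
    simp only [Finset.mem_filter, Finset.mem_product, Finset.mem_range] at hb ⊢
    exact ⟨⟨Nat.mod_lt _ hm, (hR b).2 hb.2.1⟩, Nat.mod_lt _ hn, (hQ b).2 hb.2.2⟩
  · rintro ⟨u, v⟩ hc
    simp only [Finset.mem_filter, Finset.mem_product, Finset.mem_range] at hc ⊢
    have h := (Nat.chineseRemainder hmn u v).2
    refine ⟨Nat.chineseRemainder_lt_mul hmn u v hm.ne' hn.ne', ?_, ?_⟩
    · rw [← hR, h.1, hR]; exact hc.1.2
    · rw [← hQ, h.2, hQ]; exact hc.2.2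
  · intro b hb
    simp only [Finset.mem_filter, Finset.mem_range] at hb
    have h := Nat.chineseRemainder_modEq_unique hmn (a := b % m) (b := b % n) (z := b)
      (Nat.mod_modEq _ _).symm (Nat.mod_modEq _ _).symm
    exact (Nat.ModEq.eq_of_lt_of_lt h hb.1
      (Nat.chineseRemainder_lt_mul hmn _ _ hm.ne' hn.ne')).symm
  · rintro ⟨u, v⟩ hc
    simp only [Finset.mem_filter, Finset.mem_product, Finset.mem_range] at hc
    have h := (Nat.chineseRemainder hmn u v).2
    exact Prod.ext (Eq.trans h.1 (Nat.mod_eq_of_lt hc.1.1))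
      (Eq.trans h.2 (Nat.mod_eq_of_lt hc.2.1))

theorem card_filter_range_prod (s : Finset ℕ) (hs : ∀ p ∈ s, p.Prime) (A : ℕ → ℕ → Prop)
    [∀ p, DecidablePred (A p)]
    (hA : ∀ p ∈ s, ∀ b, A p (b % p) ↔ A p b) :
    ((Finset.range (∏ p ∈ s, p)).filter fun b : ℕ => ∀ p ∈ s, A p b).card =
      ∏ p ∈ s, ((Finset.range p).filter (A p)).card := by
  induction s using Finset.induction_on with
  | empty => simp
  | insert q s hq ih =>
    have hs' : ∀ p ∈ s, p.Prime := fun p hp => hs p (Finset.mem_insert_of_mem hp)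
    have hqp : q.Prime := hs q (Finset.mem_insert_self _ _)
    rw [Finset.prod_insert hq, Finset.prod_insert hq,
      ← ih hs' fun p hp => hA p (Finset.mem_insert_of_mem hp)]
    simp only [Finset.forall_mem_insert]
    refine card_filter_range_mul ?_ hqp.pos (Finset.prod_pos fun p hp => (hs' p hp).pos) _ _
      (hA q (Finset.mem_insert_self _ _)) ?_
    · refine Nat.Coprime.prod_right fun p hp => (Nat.coprime_primes hqp (hs' p hp)).2 ?_
      rintro rfl
      exact hq hp
    · refine fun b => forall₂_congr fun p hp => ?_
      rw [← hA p (Finset.mem_insert_of_mem hp),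
        Nat.mod_mod_of_dvd _ (Finset.dvd_prod_of_mem (fun p => p) hp),
        hA p (Finset.mem_insert_of_mem hp)]

theorem dvd_sub_mod_iff (p b : ℕ) (n : ℤ) : (p : ℤ) ∣ n - ((b % p : ℕ) : ℤ) ↔ (p : ℤ) ∣ n - b := by
  have h : (n : ℤ) - ((b % p : ℕ) : ℤ) = n - b + p * (b / p : ℤ) := by
    have := Int.emod_add_mul_ediv (b : ℤ) p
    push_cast
    linarith
  rw [h, dvd_add_left (dvd_mul_right _ _)]

theorem dvd_sub_iff_eq_emod_toNat {p b : ℕ} (hb : b < p) (n : ℤ) :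
    (p : ℤ) ∣ n - b ↔ b = (n % p).toNat := by
  have hp : (p : ℤ) ≠ 0 := by omega
  have h0 := Int.emod_nonneg n hp
  rw [← Int.modEq_iff_dvd, Int.ModEq, Int.emod_eq_of_lt (by omega) (by omega)]
  omega

theorem card_range_not_dvd_sub {p : ℕ} (hp : 0 < p) (n : ℤ) :
    ((Finset.range p).filter fun b : ℕ => ¬ (p : ℤ) ∣ n - (b : ℤ)).card = p - 1 := by
  have h : ((Finset.range p).filter fun b : ℕ => ¬ (p : ℤ) ∣ n - (b : ℤ)) =
      (Finset.range p).erase (n % p).toNat := by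
    ext b
    simp only [Finset.mem_filter, Finset.mem_range, Finset.mem_erase]
    constructor
    · rintro ⟨h1, h2⟩
      exact ⟨fun h => h2 ((dvd_sub_iff_eq_emod_toNat h1 n).2 h), h1⟩
    · rintro ⟨h1, h2⟩
      exact ⟨h2, fun h => h1 ((dvd_sub_iff_eq_emod_toNat h2 n).1 h)⟩
  have h0 := Int.emod_nonneg n (b := p) (by omega)
  have h1 := Int.emod_lt_of_pos n (b := p) (by omega)
  rw [h, Finset.card_erase_of_mem (by rw [Finset.mem_range]; omega), Finset.card_range]

theorem card_range_not_dvd_sub_pair {p : ℕ} (hp : 2 ≤ p) (n m : ℤ) :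
    ((((Finset.range p).filter fun b : ℕ =>
        ¬ (p : ℤ) ∣ n - (b : ℤ) ∧ ¬ (p : ℤ) ∣ m - (b : ℤ)).card : ℕ) : ℝ) =
      (if (p : ℤ) ∣ n - m then 1 else 0) + ((p : ℝ) - 2) := by
  have hp' : (p : ℤ) ≠ 0 := by omega
  split_ifs with hd
  · have h : ∀ b : ℕ, (¬ (p : ℤ) ∣ n - (b : ℤ) ∧ ¬ (p : ℤ) ∣ m - (b : ℤ)) ↔
        ¬ (p : ℤ) ∣ n - (b : ℤ) := by
      intro b
      have : (p : ℤ) ∣ n - b ↔ (p : ℤ) ∣ m - b := by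
        rw [show n - (b : ℤ) = n - m + (m - b) by ring, dvd_add_right hd]
      tauto
    simp only [h]
    rw [card_range_not_dvd_sub (by omega), Nat.cast_sub (by omega)]
    push_cast
    ring
  · have h : ((Finset.range p).filter fun b : ℕ =>
        ¬ (p : ℤ) ∣ n - (b : ℤ) ∧ ¬ (p : ℤ) ∣ m - (b : ℤ)) =
        ((Finset.range p).erase (n % p).toNat).erase (m % p).toNat := by
      ext b
      simp only [Finset.mem_filter, Finset.mem_range, Finset.mem_erase]
      by_cases hb : b < p
      · rw [dvd_sub_iff_eq_emod_toNat hb, dvd_sub_iff_eq_emod_toNat hb]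
        tauto
      · tauto
    have n0 := Int.emod_nonneg n hp'
    have n1 := Int.emod_lt_of_pos n (b := p) (by omega)
    have m0 := Int.emod_nonneg m hp'
    have m1 := Int.emod_lt_of_pos m (b := p) (by omega)
    have hne : n % p ≠ m % p := fun h => hd (Int.modEq_iff_dvd.1 (Eq.symm h))
    rw [h, Finset.card_erase_of_mem, Finset.card_erase_of_mem, Finset.card_range, Nat.sub_sub,
      Nat.cast_sub hp]
    · push_cast
      ring
    · rw [Finset.mem_range]; omega
    · rw [Finset.mem_erase, Finset.mem_range]; omega

theorem card_sifted (s : Finset ℕ) (hs : ∀ p ∈ s, p.Prime) (n : ℤ) :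
    (((Finset.range (∏ p ∈ s, p)).filter fun b : ℕ =>
        ∀ p ∈ s, ¬ (p : ℤ) ∣ n - (b : ℤ)).card : ℝ) =
      (∏ p ∈ s, p : ℕ) * ∏ p ∈ s, (1 - 1 / (p : ℝ)) := by
  rw [card_filter_range_prod s hs (fun p b => ¬ (p : ℤ) ∣ n - (b : ℤ))
    fun p _ b => not_congr (dvd_sub_mod_iff p b n)]
  push_cast
  rw [← Finset.prod_mul_distrib]
  refine Finset.prod_congr rfl fun p hp => ?_
  have := (hs p hp).pos
  rw [card_range_not_dvd_sub this, Nat.cast_sub this]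
  field_simp
  simp

theorem card_sifted_pair (s : Finset ℕ) (hs : ∀ p ∈ s, p.Prime) (n m : ℤ) :
    (((Finset.range (∏ p ∈ s, p)).filter fun b : ℕ =>
        ∀ p ∈ s, ¬ (p : ℤ) ∣ n - (b : ℤ) ∧ ¬ (p : ℤ) ∣ m - (b : ℤ)).card : ℝ) =
      ∑ t ∈ s.powerset, (if (((∏ p ∈ t, p : ℕ)) : ℤ) ∣ n - m then 1 else 0) *
        ∏ p ∈ s \ t, ((p : ℝ) - 2) := by
  rw [card_filter_range_prod s hs
    (fun p b => ¬ (p : ℤ) ∣ n - (b : ℤ) ∧ ¬ (p : ℤ) ∣ m - (b : ℤ))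
    fun p _ b => and_congr (not_congr (dvd_sub_mod_iff p b n)) (not_congr (dvd_sub_mod_iff p b m))]
  push_cast
  rw [Finset.prod_congr rfl fun p hp => card_range_not_dvd_sub_pair (hs p hp).two_le n m,
    Finset.prod_add]
  refine Finset.sum_congr rfl fun t ht => ?_
  congr 1
  rw [Finset.prod_ite_zero]
  simp only [Finset.prod_const_one]
  congr 1
  rw [eq_iff_iff]
  constructor
  · refine fun h => Finset.prod_dvd_of_coprime ?_ h
    intro p hp q hq hpq
    have ht' := Finset.mem_powerset.1 ht
    exact Nat.isCoprime_iff_coprime.2 ((Nat.coprime_primes (hs p (ht' hp)) (hs q (ht' hq))).2 hpq)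
  · exact fun h p hp => (Finset.dvd_prod_of_mem (fun p : ℕ => (p : ℤ)) hp).trans h

theorem sum_range_dvd_sub_le {d : ℕ} (y : ℕ) (a : ℤ) :
    ∑ j ∈ Finset.range y, (if (d : ℤ) ∣ (a + (y : ℤ)) - (a + (j : ℤ)) then (1 : ℝ) else 0) ≤
      y * (1 / d) := by
  rw [← Finset.sum_range_reflect, ← div_eq_mul_one_div]
  refine le_trans (le_of_eq ?_) (Nat.cast_div_le (m := y) (n := d))
  rw [← Nat.card_multiples, Finset.card_filter, Nat.cast_sum]
  refine Finset.sum_congr rfl fun j hj => ?_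
  have hj' := Finset.mem_range.1 hj
  have : (a + (y : ℤ)) - (a + ((y - 1 - j : ℕ) : ℤ)) = ((j + 1 : ℕ) : ℤ) := by omega
  simp only [this, Int.natCast_dvd_natCast, Nat.cast_ite, Nat.cast_one, Nat.cast_zero]

theorem sum_card_sifted_pair_le (s : Finset ℕ) (hs : ∀ p ∈ s, p.Prime) (y : ℕ) (a : ℤ) :
    ∑ j ∈ Finset.range y, (((Finset.range (∏ p ∈ s, p)).filter fun b : ℕ =>
        ∀ p ∈ s, ¬ (p : ℤ) ∣ (a + (y : ℤ)) - (b : ℤ) ∧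
          ¬ (p : ℤ) ∣ (a + (j : ℤ)) - (b : ℤ)).card : ℝ) ≤
      y * ((∏ p ∈ s, p : ℕ) * (∏ p ∈ s, (1 - 1 / (p : ℝ))) ^ 2) := by
  simp_rw [card_sifted_pair s hs]
  rw [Finset.sum_comm]
  simp_rw [← Finset.sum_mul]
  calc _ ≤ ∑ t ∈ s.powerset, (y * (1 / ((∏ p ∈ t, p : ℕ) : ℝ))) * ∏ p ∈ s \ t, ((p : ℝ) - 2) := by
        refine Finset.sum_le_sum fun t _ => ?_
        refine mul_le_mul_of_nonneg_right (sum_range_dvd_sub_le y a) ?_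
        refine Finset.prod_nonneg fun p hp => ?_
        have := (hs p (Finset.mem_sdiff.1 hp).1).two_le
        rw [sub_nonneg]
        exact_mod_cast this
    _ = y * ∏ p ∈ s, (1 / (p : ℝ) + ((p : ℝ) - 2)) := by
        rw [Finset.prod_add, Finset.mul_sum]
        refine Finset.sum_congr rfl fun t _ => ?_
        push_cast
        rw [Finset.prod_div_distrib, Finset.prod_const_one]
        ring
    _ = _ := by
        congr 1
        push_cast
        rw [← Finset.prod_pow, ← Finset.prod_mul_distrib]
        refine Finset.prod_congr rfl fun p hp => ?_
        have : (p : ℝ) ≠ 0 := by exact_mod_cast (hs p hp).ne_zero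
        field_simp
        ring

/-- The second moment of the number of survivors of a sieve in an interval of length `y`,
over a random shift, is at most that of a Poisson variable of the same mean. -/
theorem sum_sq_card_sifted_le (s : Finset ℕ) (hs : ∀ p ∈ s, p.Prime) (a : ℤ) (y : ℕ) :
    ∑ b ∈ Finset.range (∏ p ∈ s, p),
        (∑ i ∈ Finset.range y, if ∀ p ∈ s, ¬ (p : ℤ) ∣ (a + (i : ℤ)) - (b : ℤ)
          then (1 : ℝ) else 0) ^ 2 ≤
      (∏ p ∈ s, p : ℕ) * ((∏ p ∈ s, (1 - 1 / (p : ℝ))) * y +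
        ((∏ p ∈ s, (1 - 1 / (p : ℝ))) * y) ^ 2) := by
  induction y with
  | zero => simp
  | succ y ih =>
    have h1 := card_sifted s hs (a + y)
    have h2 := sum_card_sifted_pair_le s hs y a
    simp_rw [Finset.card_filter, Nat.cast_sum] at h1 h2
    rw [Finset.sum_comm] at h2
    set P : ℝ := ((∏ p ∈ s, p : ℕ) : ℝ)
    set σ : ℝ := ∏ p ∈ s, (1 - 1 / (p : ℝ))
    have hP : 0 ≤ P := Nat.cast_nonneg _
    have key : ∀ b : ℕ, (∑ i ∈ Finset.range (y + 1),
          if ∀ p ∈ s, ¬ (p : ℤ) ∣ (a + (i : ℤ)) - (b : ℤ) then (1 : ℝ) else 0) ^ 2 =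
        (∑ i ∈ Finset.range y,
          if ∀ p ∈ s, ¬ (p : ℤ) ∣ (a + (i : ℤ)) - (b : ℤ) then (1 : ℝ) else 0) ^ 2 +
        2 * (∑ j ∈ Finset.range y, (((if ∀ p ∈ s, ¬ (p : ℤ) ∣ (a + (y : ℤ)) - (b : ℤ) ∧
          ¬ (p : ℤ) ∣ (a + (j : ℤ)) - (b : ℤ) then 1 else 0 : ℕ)) : ℝ)) +
        ((if ∀ p ∈ s, ¬ (p : ℤ) ∣ (a + (y : ℤ)) - (b : ℤ) then 1 else 0 : ℕ) : ℝ) := by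
      intro b
      rw [Finset.sum_range_succ]
      by_cases h : ∀ p ∈ s, ¬ (p : ℤ) ∣ (a + (y : ℤ)) - (b : ℤ)
      · have h' : ∀ j : ℕ, (∀ p ∈ s, ¬ (p : ℤ) ∣ (a + (y : ℤ)) - (b : ℤ) ∧
          ¬ (p : ℤ) ∣ (a + (j : ℤ)) - (b : ℤ)) ↔
            ∀ p ∈ s, ¬ (p : ℤ) ∣ (a + (j : ℤ)) - (b : ℤ) := fun j =>
          ⟨fun H p hp => (H p hp).2, fun H p hp => ⟨h p hp, H p hp⟩⟩
        simp only [h', if_pos h, Nat.cast_ite, Nat.cast_one, Nat.cast_zero]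
        ring
      · have h' : ∀ j : ℕ, ¬ (∀ p ∈ s, ¬ (p : ℤ) ∣ (a + (y : ℤ)) - (b : ℤ) ∧
          ¬ (p : ℤ) ∣ (a + (j : ℤ)) - (b : ℤ)) := fun j H => h fun p hp => (H p hp).1
        simp only [h', if_neg h, if_false]
        simp
    simp_rw [key]
    rw [Finset.sum_add_distrib, Finset.sum_add_distrib, ← Finset.mul_sum, h1]
    rw [Nat.cast_add_one]
    nlinarith [mul_nonneg hP (sq_nonneg σ)]

theorem card_many_sifted_le (s : Finset ℕ) (hs : ∀ p ∈ s, p.Prime) (a : ℤ) (y : ℕ) :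
    (((Finset.range (∏ p ∈ s, p)).filter fun b : ℕ =>
        2 * (∏ p ∈ s, (1 - 1 / (p : ℝ))) * (y : ℝ) <
          ∑ i ∈ Finset.range y, if ∀ p ∈ s, ¬ (p : ℤ) ∣ (a + (i : ℤ)) - (b : ℤ)
            then (1 : ℝ) else 0).card : ℝ) * ((∏ p ∈ s, (1 - 1 / (p : ℝ))) * y) ^ 2 ≤
      (∏ p ∈ s, p : ℕ) * ((∏ p ∈ s, (1 - 1 / (p : ℝ))) * y) := by
  have h2 := sum_sq_card_sifted_le s hs a y
  have h1 : ∑ b ∈ Finset.range (∏ p ∈ s, p),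
      (∑ i ∈ Finset.range y, if ∀ p ∈ s, ¬ (p : ℤ) ∣ (a + (i : ℤ)) - (b : ℤ)
          then (1 : ℝ) else 0) =
      (∏ p ∈ s, p : ℕ) * ((∏ p ∈ s, (1 - 1 / (p : ℝ))) * y) := by
    rw [Finset.sum_comm]
    have : ∀ i : ℕ, (∑ b ∈ Finset.range (∏ p ∈ s, p),
        if ∀ p ∈ s, ¬ (p : ℤ) ∣ (a + (i : ℤ)) - (b : ℤ) then (1 : ℝ) else 0) =
        (∏ p ∈ s, p : ℕ) * (∏ p ∈ s, (1 - 1 / (p : ℝ))) := by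
      intro i
      rw [← card_sifted s hs (a + i), Finset.card_filter]
      push_cast
      rfl
    simp_rw [this]
    rw [Finset.sum_const, Finset.card_range, nsmul_eq_mul]
    ring
  have hσ : 0 ≤ ∏ p ∈ s, (1 - 1 / (p : ℝ)) := by
    refine Finset.prod_nonneg fun p hp => ?_
    rw [sub_nonneg]
    exact div_le_one_of_le₀ (by exact_mod_cast (hs p hp).one_le) (Nat.cast_nonneg _)
  set σ : ℝ := ∏ p ∈ s, (1 - 1 / (p : ℝ))
  set X : ℕ → ℝ := fun b => ∑ i ∈ Finset.range y,
    if ∀ p ∈ s, ¬ (p : ℤ) ∣ (a + (i : ℤ)) - (b : ℤ) then (1 : ℝ) else 0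
  have hσy : 0 ≤ σ * y := mul_nonneg hσ (Nat.cast_nonneg _)
  calc _ = ∑ b ∈ (Finset.range (∏ p ∈ s, p)).filter (fun b => 2 * σ * y < X b), (σ * y) ^ 2 := by
        rw [Finset.sum_const, nsmul_eq_mul]
    _ ≤ ∑ b ∈ (Finset.range (∏ p ∈ s, p)).filter (fun b => 2 * σ * y < X b),
          (X b - σ * y) ^ 2 := by
        refine Finset.sum_le_sum fun b hb => ?_
        have := (Finset.mem_filter.1 hb).2
        exact pow_le_pow_left₀ hσy (by linarith) 2
    _ ≤ ∑ b ∈ Finset.range (∏ p ∈ s, p), (X b - σ * y) ^ 2 :=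
        Finset.sum_le_sum_of_subset_of_nonneg (Finset.filter_subset _ _) fun _ _ _ => sq_nonneg _
    _ = ∑ b ∈ Finset.range (∏ p ∈ s, p), X b ^ 2 -
          2 * (σ * y) * ∑ b ∈ Finset.range (∏ p ∈ s, p), X b +
          (∏ p ∈ s, p : ℕ) * (σ * y) ^ 2 := by
        simp_rw [sub_sq]
        rw [Finset.sum_add_distrib, Finset.sum_sub_distrib, Finset.sum_const, Finset.card_range,
          nsmul_eq_mul, Finset.mul_sum]
        congr 2
        exact Finset.sum_congr rfl fun b _ => by ring
    _ ≤ _ := by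
        rw [h1]
        nlinarith [h2]

theorem mem_primesUpTo {t : ℝ} {p : ℕ} (ht : 0 ≤ t) :
    p ∈ primesUpTo t ↔ p.Prime ∧ (p : ℝ) ≤ t := by
  simp only [primesUpTo, Finset.mem_filter, Finset.mem_range, Nat.lt_succ_iff, Nat.le_floor_iff ht]
  tauto

theorem countS_eq_sum {t : ℝ} (ht : 0 ≤ t) (a b : ℤ) (y : ℕ) :
    (countS t b a (a + y - 1) : ℝ) = ∑ i ∈ Finset.range y,
      if ∀ p ∈ primesUpTo t, ¬ (p : ℤ) ∣ (a + (i : ℤ)) - b then (1 : ℝ) else 0 := by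
  rw [countS, Finset.card_filter, Nat.cast_sum]
  symm
  refine Finset.sum_bij (fun i _ => a + (i : ℤ)) ?_ ?_ ?_ ?_
  · intro i hi
    have := Finset.mem_range.1 hi
    rw [Finset.mem_Icc]
    omega
  · intro i _ j _ h
    simpa using h
  · intro n hn
    rw [Finset.mem_Icc] at hn
    exact ⟨(n - a).toNat, by rw [Finset.mem_range]; omega, by omega⟩
  · intro i _
    have : (∀ p ∈ primesUpTo t, ¬ (p : ℤ) ∣ (a + (i : ℤ)) - b) ↔ inS t b (a + i) := by
      simp only [mem_primesUpTo ht, inS, and_imp]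
    simp only [this, Nat.cast_ite, Nat.cast_one, Nat.cast_zero]

theorem countS_neg_sub (t : ℝ) (N b lo hi : ℤ) :
    countS t (-N - b) (-hi) (-lo) = countS t b (lo - N) (hi - N) := by
  refine Finset.card_bij' (fun n _ => -n - N) (fun n _ => -n - N) ?_ ?_ ?_ ?_
  · intro n hn
    simp only [Finset.mem_filter, Finset.mem_Icc] at hn ⊢
    refine ⟨by omega, fun p hp hpt h => hn.2 p hp hpt ?_⟩
    exact (dvd_neg.2 h).trans (dvd_of_eq (by ring))
  · intro n hn
    simp only [Finset.mem_filter, Finset.mem_Icc] at hn ⊢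
    refine ⟨by omega, fun p hp hpt h => hn.2 p hp hpt ?_⟩
    exact (dvd_neg.2 h).trans (dvd_of_eq (by ring))
  · exact fun n _ => by omega
  · exact fun n _ => by omega

theorem prod_primesLE_sq_ge (n : ℕ) (hn : 1 ≤ n) :
    1 ≤ 4 * (n : ℝ) * (∏ p ∈ (Finset.range (n + 1)).filter Nat.Prime, (1 - 1 / (p : ℝ))) ^ 2 := by
  induction n using Nat.strong_induction_on with
  | _ n ih =>
    by_cases hp : n.Prime
    · rcases hp.eq_two_or_odd' with rfl | hodd
      · norm_num [Finset.range_add_one, Nat.prime_two, Finset.prod_filter]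
      · obtain ⟨k, rfl⟩ := hodd
        have hk : k ≠ 0 := by
          rintro rfl
          exact Nat.not_prime_one hp
        by_cases hk1 : k = 1
        · subst hk1
          norm_num [Finset.range_add_one, Finset.prod_filter, Nat.prime_two, Nat.prime_three]
        · have hnp : ¬ (2 * k).Prime := by
            intro h
            have := (Nat.prime_dvd_prime_iff_eq Nat.prime_two h).1 (dvd_mul_right _ _)
            omega
          have h := ih (2 * k - 1) (by omega) (by omega)
          rw [show 2 * k - 1 + 1 = 2 * k by omega] at h
          rw [Finset.prod_filter] at h ⊢
          rw [Finset.prod_range_succ, Finset.prod_range_succ, if_pos hp, if_neg hnp, mul_one]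
          set F := ∏ p ∈ Finset.range (2 * k), if p.Prime then 1 - 1 / (p : ℝ) else 1
          rw [Nat.cast_sub (by omega)] at h
          push_cast at h ⊢
          have hk0 : (0 : ℝ) < 2 * k + 1 := by positivity
          have e : 4 * (2 * (k : ℝ) + 1) * (F * (1 - 1 / (2 * k + 1))) ^ 2 =
              4 * (2 * k - 1) * F ^ 2 + 4 * F ^ 2 / (2 * k + 1) := by
            field_simp
            ring
          rw [e]
          have : 0 ≤ 4 * F ^ 2 / (2 * k + 1) := by positivity
          linarith
    · by_cases h1 : n = 1
      · subst h1
        norm_num [Finset.range_add_one, Finset.prod_filter, Nat.not_prime_one]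
      · have h := ih (n - 1) (by omega) (by omega)
        rw [show n - 1 + 1 = n by omega] at h
        rw [Finset.prod_filter] at h ⊢
        rw [Finset.prod_range_succ, if_neg hp, mul_one]
        refine h.trans (mul_le_mul_of_nonneg_right ?_ (sq_nonneg _))
        have : ((n - 1 : ℕ) : ℝ) ≤ n := by exact_mod_cast Nat.sub_le n 1
        linarith

theorem one_le_four_mul_sigUpTo_sq {t : ℝ} {y : ℕ} (ht : 0 ≤ t) (hy : 1 ≤ y) (hty : t ≤ y) :
    1 ≤ 4 * (y : ℝ) * sigUpTo t ^ 2 := by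
  have h : primesUpTo t = (Finset.range (⌊t⌋₊ + 1)).filter Nat.Prime := by
    ext p
    rw [mem_primesUpTo ht, Finset.mem_filter, Finset.mem_range, Nat.lt_succ_iff,
      Nat.le_floor_iff ht]
    tauto
  rw [sigUpTo, h]
  have hy' : (1 : ℝ) ≤ y := by exact_mod_cast hy
  rcases Nat.eq_zero_or_pos ⌊t⌋₊ with h0 | h0
  · rw [h0]
    norm_num [Finset.prod_filter, Nat.not_prime_zero]
    linarith
  · refine (prod_primesLE_sq_ge _ h0).trans (mul_le_mul_of_nonneg_right ?_ (sq_nonneg _))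
    have := (Nat.floor_le ht).trans hty
    linarith

theorem card_countS_gt_le {t L : ℝ} {y : ℕ} (ht : 0 ≤ t) (hy : 1 ≤ y) (hty : t ≤ y) (hL : 0 < L)
    (hLy : L ≤ Real.sqrt y) (a : ℤ) :
    (((Finset.range (PP t)).filter fun b : ℕ =>
      2 * sigUpTo t * (y : ℝ) < (countS t (b : ℤ) a (a + y - 1) : ℝ)).card : ℝ) ≤
      2 * (PP t : ℝ) / L := by
  simp_rw [countS_eq_sum ht]
  have h := card_many_sifted_le (primesUpTo t) (fun p hp => ((mem_primesUpTo ht).1 hp).1) a y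
  have hs := one_le_four_mul_sigUpTo_sq ht hy hty
  have hσ0 : 0 ≤ sigUpTo t := by
    refine Finset.prod_nonneg fun p hp => ?_
    rw [sub_nonneg]
    exact div_le_one_of_le₀ (by exact_mod_cast ((mem_primesUpTo ht).1 hp).1.one_le)
      (Nat.cast_nonneg _)
  rw [← sigUpTo, ← PP] at h
  set c : ℝ := ((Finset.card _ : ℕ) : ℝ)
  have hy' : (1 : ℝ) ≤ y := by exact_mod_cast hy
  have hLσ : L ≤ 2 * (sigUpTo t * y) := by
    refine hLy.trans (Real.sqrt_le_iff.2 ⟨by positivity, ?_⟩)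
    nlinarith
  have hpos : 0 < sigUpTo t * y := by linarith
  have h' : c * (sigUpTo t * y) ≤ PP t := by
    refine le_of_mul_le_mul_right ?_ hpos
    linarith
  rw [le_div_iff₀ hL]
  have hc : 0 ≤ c := Nat.cast_nonneg _
  nlinarith [mul_le_mul_of_nonneg_left hLσ hc]

theorem eventually_log_log_sq_le :
    ∀ᶠ x : ℝ in Filter.atTop, Real.log (Real.log x) ^ 2 ≤ Real.log x ^ (1 / 2 : ℝ) := by
  have h := (isLittleO_log_rpow_rpow_atTop (2 : ℝ) (show (0 : ℝ) < 1 / 2 by norm_num)).bound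
    one_pos
  filter_upwards [Real.tendsto_log_atTop.eventually h,
    Real.tendsto_log_atTop.eventually_ge_atTop 1] with x hx hx1
  rw [one_mul, Real.norm_eq_abs, Real.norm_eq_abs, Real.rpow_two,
    abs_of_nonneg (Real.rpow_nonneg (x := Real.log x) (by linarith) (1 / 2))] at hx
  exact (le_abs_self _).trans hx

/-- The `Finset` monad expression is what elaboration of `(range k).filter` at a predicate on `ℤ`
produces. -/
theorem card_filter_bind_pure_natCast (s : Finset ℕ) (q : ℤ → Prop) [DecidablePred q] :
    ((do let a ← s; pure (a : ℤ) : Finset ℤ).filter q).card =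
      (s.filter fun b : ℕ => q b).card := by
  symm
  refine Finset.card_bij (fun b _ => (b : ℤ)) ?_ ?_ ?_
  · intro b hb
    simpa using hb
  · intro b _ c _ h
    simpa using h
  · intro n hn
    obtain ⟨hn, hq⟩ := Finset.mem_filter.1 hn
    obtain ⟨b, hb, hbn⟩ : ∃ b ∈ s, (b : ℤ) = n := by simpa using hn
    exact ⟨b, Finset.mem_filter.2 ⟨hb, hbn.symm ▸ hq⟩, hbn⟩

theorem stmt13 (δ : ℝ) (hδ0 : 0 < δ) (hδ1 : δ < 1/2) :
    ∃ C : ℝ, 0 < C ∧ ∃ x₀ : ℝ, ∀ x ≥ x₀, ∀ N : ℤ,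
      ((((Finset.range (PP (zz δ x))).filter (fun b =>
          2 * sigUpTo (zz δ x) * (yy δ x : ℝ) <
            (countS (zz δ x) (b : ℤ) 1 (yy δ x) : ℝ))).card : ℝ) ≤
        C * (PP (zz δ x) : ℝ) / Real.log x) ∧
      ((((Finset.range (PP (zz δ x))).filter (fun b =>
          2 * sigUpTo (zz δ x) * (yy δ x : ℝ) <
            (countS (zz δ x) (-N - (b : ℤ)) (-(yy δ x : ℤ)) (-1) : ℝ))).card : ℝ) ≤
        C * (PP (zz δ x) : ℝ) / Real.log x) := by
  have hsq : ∀ᶠ x : ℝ in Filter.atTop, Real.log x ≤ Real.sqrt x := by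
    filter_upwards [(isLittleO_log_rpow_atTop (show (0 : ℝ) < 1 / 2 by norm_num)).bound one_pos]
      with x hx
    rw [one_mul, ← Real.sqrt_eq_rpow, Real.norm_eq_abs, Real.norm_eq_abs,
      abs_of_nonneg (Real.sqrt_nonneg _)] at hx
    exact (le_abs_self _).trans hx
  obtain ⟨x₀, hx₀⟩ := Filter.eventually_atTop.1 (hsq.and (eventually_log_log_sq_le.and
    ((Real.tendsto_log_atTop.eventually_ge_atTop 1).and (Filter.eventually_ge_atTop 1))))
  refine ⟨2, two_pos, x₀, fun x hx N => ?_⟩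
  obtain ⟨h1, h2, h3, h4⟩ := hx₀ x hx
  have hxy : x ≤ yy δ x :=
    (le_mul_of_one_le_right (by linarith) (Real.one_le_rpow h3 hδ0.le)).trans (Nat.le_ceil _)
  have hy : 1 ≤ yy δ x := by exact_mod_cast h4.trans hxy
  have hz0 : 0 ≤ zz δ x := by
    have := Real.rpow_nonneg (show 0 ≤ Real.log x by linarith) (1 / 2)
    rw [zz]
    positivity
  have hzy : zz δ x ≤ yy δ x := by
    have := Real.rpow_pos_of_pos (show 0 < Real.log x by linarith) (1 / 2)
    rw [zz, div_le_iff₀ this]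
    exact mul_le_mul_of_nonneg_left h2 (Nat.cast_nonneg _)
  have main := card_countS_gt_le hz0 hy hzy (L := Real.log x) (by linarith)
    (h1.trans (Real.sqrt_le_sqrt hxy))
  refine ⟨?_, ?_⟩
  · rw [card_filter_bind_pure_natCast]
    have h := main 1
    rwa [show (1 : ℤ) + yy δ x - 1 = yy δ x by ring] at h
  · rw [card_filter_bind_pure_natCast]
    have h := main (1 - N)
    rw [show (1 - N : ℤ) + yy δ x - 1 = yy δ x - N by ring] at h
    simp_rw [countS_neg_sub]
    exact h
end
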